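/- Fix N ≥ 2. The matrix-product operator U_N generated by the tensor A with boundary b is unitary if and only if for every string (α_1, …, α_N) ∈ {0, 1, …, d²−1}^N one has Tr(B S_{α_N} ⋯ S_{α_2} S_{α_1}) = 1 when all α_k = 0, and Tr(B S_{α_N} ⋯ S_{α_2} S_{α_1}) = 0 otherwise. -/

import Mathlib

open Matrix Kronecker

noncomputable section

/-- The bulk product `A^{i_1 j_1} ⋯ A^{i_N j_N}` of a uniform tensor. -/
def uProd (d D : ℕ) (A : Fin d → Fin d → Matrix (Fin D) (Fin D) ℂ) (N : ℕ)
    (i j : Fin N → Fin d) : Matrix (Fin D) (Fin D) ℂ :=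
  ((List.finRange N).map (fun k => A (i k) (j k))).prod

/-- The matrix-product operator `U_N` generated by the uniform tensor `A` with boundary
matrix `b`:  `⟨i_1 … i_N|U_N|j_1 … j_N⟩ = Tr(b A^{i_1 j_1} ⋯ A^{i_N j_N})`. -/
def uMPO (d D : ℕ) (A : Fin d → Fin d → Matrix (Fin D) (Fin D) ℂ)
    (b : Matrix (Fin D) (Fin D) ℂ) (N : ℕ) :
    Matrix (Fin N → Fin d) (Fin N → Fin d) ℂ :=
  Matrix.of fun i j => (b * uProd d D A N i j).trace

/-- `Σ_{i,j,j'} M_{j'j} · conj(A^{ij'}) ⊗ A^{ij}` (Kronecker product, entrywise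
conjugation). -/
def uSmatM (d D : ℕ) (A : Fin d → Fin d → Matrix (Fin D) (Fin D) ℂ)
    (M : Matrix (Fin d) (Fin d) ℂ) : Matrix (Fin D × Fin D) (Fin D × Fin D) ℂ :=
  ∑ i, ∑ j, ∑ j', M j' j • (((A i j').map (starRingEnd ℂ)) ⊗ₖ (A i j))

/-- `S_α`, where `α = 0` (for which `σ 0 = 𝟙`) carries the extra `1/d` factor, so that
`S_0 = E` is the transfer matrix. -/
def uS (d D : ℕ) (A : Fin d → Fin d → Matrix (Fin D) (Fin D) ℂ)
    (σ : Fin (d * d) → Matrix (Fin d) (Fin d) ℂ) (α : Fin (d * d)) :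
    Matrix (Fin D × Fin D) (Fin D × Fin D) ℂ :=
  (if (α : ℕ) = 0 then ((d : ℂ))⁻¹ else 1) • uSmatM d D A (σ α)

/-- The transfer matrix `E = (1/d) Σ_{i,j} conj(A^{ij}) ⊗ A^{ij}`. -/
def uE (d D : ℕ) (A : Fin d → Fin d → Matrix (Fin D) (Fin D) ℂ) :
    Matrix (Fin D × Fin D) (Fin D × Fin D) ℂ :=
  ((d : ℂ))⁻¹ • uSmatM d D A 1

/-- The word `S_{α_N} ⋯ S_{α_2} S_{α_1}`. -/
def uSword (d D : ℕ) (A : Fin d → Fin d → Matrix (Fin D) (Fin D) ℂ)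
    (σ : Fin (d * d) → Matrix (Fin d) (Fin d) ℂ) (N : ℕ) (α : Fin N → Fin (d * d)) :
    Matrix (Fin D × Fin D) (Fin D × Fin D) ℂ :=
  ((List.finRange N).reverse.map (fun k => uS d D A σ (α k))).prod

/-!
Expanding the word site by site, the trace of `B` against a product of double layers
`Σ M_{j'j} conj(A^{ij'}) ⊗ A^{ij}` is the trace of `(M_1 ⊗ ⋯ ⊗ M_N)ᵀ * (U_Nᴴ * U_N)`. If the
matrices `M_k` run through a spanning family, their tensor products separate matrices on the whole
chain, so `U_Nᴴ * U_N = 1` says exactly that each of these traces takes its value at the identity,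
`∏ tr M_k`. Rescaling `σ_0` by `1 / d` makes this product `1` on the all-zero string and `0` on the
others.
-/

section PiKronecker

variable {R κ : Type*} [CommSemiring R] [Fintype κ] {m n : κ → Type*}

/-- The Kronecker product `⨂ₖ M k` of a finite family of matrices, as a multilinear map in the
family. Its rows and columns are indexed by dependent functions, so no order on the factors is
chosen. -/
def piKronecker :
    MultilinearMap R (fun k => Matrix (m k) (n k) R) (Matrix (∀ k, m k) (∀ k, n k) R) where
  toFun M := Matrix.of fun i j => ∏ k, M k (i k) (j k)
  map_update_add' M k P Q := by
    ext i j
    exact ((MultilinearMap.mkPiAlgebra R κ R).compLinearMap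
      fun k => Matrix.entryLinearMap R R (i k) (j k)).map_update_add M k P Q
  map_update_smul' M k c P := by
    ext i j
    exact ((MultilinearMap.mkPiAlgebra R κ R).compLinearMap
      fun k => Matrix.entryLinearMap R R (i k) (j k)).map_update_smul M k c P

theorem piKronecker_apply (M : ∀ k, Matrix (m k) (n k) R) (i : ∀ k, m k) (j : ∀ k, n k) :
    piKronecker M i j = ∏ k, M k (i k) (j k) :=
  rfl

theorem piKronecker_single_one [∀ k, DecidableEq (m k)] [∀ k, DecidableEq (n k)]
    (i : ∀ k, m k) (j : ∀ k, n k) :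
    piKronecker (fun k => Matrix.single (i k) (j k) (1 : R)) = Matrix.single i j 1 := by
  ext i' j'
  simp only [piKronecker_apply, Matrix.single_apply, Fintype.prod_boole, funext_iff, forall_and]

theorem trace_piKronecker [DecidableEq κ] [∀ k, Fintype (m k)] (M : ∀ k, Matrix (m k) (m k) R) :
    (piKronecker M).trace = ∏ k, (M k).trace :=
  (Fintype.prod_sum fun k i => M k i i).symm

theorem ext_iff_trace_piKronecker_transpose_mul [DecidableEq κ] [∀ k, Fintype (m k)]
    [∀ k, Fintype (n k)] {ι : κ → Type*} {τ : ∀ k, ι k → Matrix (m k) (n k) R}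
    (hτ : ∀ k, Submodule.span R (Set.range (τ k)) = ⊤) {X Y : Matrix (∀ k, m k) (∀ k, n k) R} :
    X = Y ↔ ∀ α : ∀ k, ι k, ((piKronecker fun k => τ k (α k))ᵀ * X).trace =
      ((piKronecker fun k => τ k (α k))ᵀ * Y).trace := by
  classical
  refine ⟨fun h _ => by rw [h], fun h => ?_⟩
  let pairing (Z : Matrix (∀ k, m k) (∀ k, n k) R) :
      MultilinearMap R (fun k => Matrix (m k) (n k) R) R :=
    (Matrix.traceLinearMap (∀ k, n k) R R ∘ₗ mulRightLinearMap (∀ k, n k) R Z ∘ₗ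
      (Matrix.transposeLinearEquiv (∀ k, m k) (∀ k, n k) R R).toLinearMap).compMultilinearMap
      piKronecker
  have pairing_eq : pairing X = pairing Y := MultilinearMap.ext_of_span_eq_top hτ h
  ext i j
  have entry_eq : ((piKronecker fun k => Matrix.single (i k) (j k) (1 : R))ᵀ * X).trace =
      ((piKronecker fun k => Matrix.single (i k) (j k) (1 : R))ᵀ * Y).trace :=
    DFunLike.congr_fun pairing_eq _
  simpa [piKronecker_single_one, Matrix.trace_single_mul] using entry_eq

end PiKronecker

section ListProd

theorem prod_map_finRange_sum {S ι : Type*} [Semiring S] [Fintype ι] {N : ℕ} (f : Fin N → ι → S) :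
    ((List.finRange N).map fun k => ∑ a, f k a).prod =
      ∑ a : Fin N → ι, ((List.finRange N).map fun k => f k (a k)).prod := by
  simpa only [MultilinearMap.mkPiAlgebraFin_apply, List.ofFn_eq_map] using
    (MultilinearMap.mkPiAlgebraFin ℕ N S).map_sum f

theorem prod_map_finRange_smul {R S : Type*} [CommSemiring R] [Semiring S] [Algebra R S] {N : ℕ}
    (c : Fin N → R) (f : Fin N → S) :
    ((List.finRange N).map fun k => c k • f k).prod =
      (∏ k, c k) • ((List.finRange N).map f).prod := by
  simpa only [MultilinearMap.mkPiAlgebraFin_apply, List.ofFn_eq_map] using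
    (MultilinearMap.mkPiAlgebraFin R N S).map_smul_univ c f

theorem list_prod_map_kronecker {R ι m n : Type*} [CommSemiring R] [Fintype m] [DecidableEq m]
    [Fintype n] [DecidableEq n] (l : List ι) (X : ι → Matrix m m R) (Y : ι → Matrix n n R) :
    (l.map fun k => X k ⊗ₖ Y k).prod = (l.map X).prod ⊗ₖ (l.map Y).prod := by
  induction l with
  | nil => simp
  | cons a l ih => simp only [List.map_cons, List.prod_cons, ih, Matrix.mul_kronecker_mul]

end ListProd

section DoubleLayer

variable {d D N : ℕ} (A : Fin d → Fin d → Matrix (Fin D) (Fin D) ℂ)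
  (b : Matrix (Fin D) (Fin D) ℂ)

theorem prod_map_conj_kronecker_eq_uProd (i j j' : Fin N → Fin d) :
    ((List.finRange N).map fun k =>
      (A (i k) (j' k)).map (starRingEnd ℂ) ⊗ₖ A (i k) (j k)).prod =
      (uProd d D A N i j').map (starRingEnd ℂ) ⊗ₖ uProd d D A N i j := by
  have map_conj_uProd : (uProd d D A N i j').map (starRingEnd ℂ) =
      ((List.finRange N).map fun k => (A (i k) (j' k)).map (starRingEnd ℂ)).prod := by
    simpa [Function.comp_def] using! map_list_prod (starRingEnd ℂ).mapMatrix
      ((List.finRange N).map fun k => A (i k) (j' k))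
  rw [list_prod_map_kronecker, map_conj_uProd, uProd]

theorem prod_map_uSmatM (M : Fin N → Matrix (Fin d) (Fin d) ℂ) :
    ((List.finRange N).map fun k => uSmatM d D A (M k)).prod =
      ∑ i : Fin N → Fin d, ∑ j : Fin N → Fin d, ∑ j' : Fin N → Fin d,
        piKronecker M j' j • ((uProd d D A N i j').map (starRingEnd ℂ) ⊗ₖ uProd d D A N i j) := by
  simp only [uSmatM, prod_map_finRange_sum, prod_map_finRange_smul,
    prod_map_conj_kronecker_eq_uProd, piKronecker_apply]

theorem trace_conj_kronecker_mul_uProd (i j j' : Fin N → Fin d) :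
    ((b.map (starRingEnd ℂ) ⊗ₖ b) *
      ((uProd d D A N i j').map (starRingEnd ℂ) ⊗ₖ uProd d D A N i j)).trace =
      star (uMPO d D A b N i j') * uMPO d D A b N i j := by
  rw [← Matrix.mul_kronecker_mul, Matrix.trace_kronecker, ← Matrix.map_mul,
    ← AddMonoidHom.map_trace]
  rfl

theorem trace_conj_kronecker_mul_prod_uSmatM (M : Fin N → Matrix (Fin d) (Fin d) ℂ) :
    ((b.map (starRingEnd ℂ) ⊗ₖ b) *
      ((List.finRange N).map fun k => uSmatM d D A (M k)).prod).trace =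
      ((piKronecker M)ᵀ * (star (uMPO d D A b N) * uMPO d D A b N)).trace := by
  calc
    _ = ∑ i, ∑ j, ∑ j', piKronecker M j' j *
        (star (uMPO d D A b N i j') * uMPO d D A b N i j) := by
      simp only [prod_map_uSmatM, Finset.mul_sum, Matrix.trace_sum, Matrix.mul_smul,
        Matrix.trace_smul, trace_conj_kronecker_mul_uProd, smul_eq_mul]
    _ = ∑ j, ∑ j', ∑ i, piKronecker M j' j *
        (star (uMPO d D A b N i j') * uMPO d D A b N i j) := by
      rw [Finset.sum_comm]
      exact Finset.sum_congr rfl fun j _ => Finset.sum_comm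
    _ = _ := by
      simp only [Matrix.trace, Matrix.diag_apply, Matrix.mul_apply, Matrix.transpose_apply,
        Matrix.star_apply, Finset.mul_sum]

theorem uMPO_mem_unitaryGroup_iff_of_span_eq_top {ι : Type*}
    {τ : ι → Matrix (Fin d) (Fin d) ℂ} (hτ : Submodule.span ℂ (Set.range τ) = ⊤) :
    uMPO d D A b N ∈ Matrix.unitaryGroup (Fin N → Fin d) ℂ ↔
      ∀ α : Fin N → ι, ((b.map (starRingEnd ℂ) ⊗ₖ b) *
        ((List.finRange N).map fun k => uSmatM d D A (τ (α k))).prod).trace =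
          ∏ k, (τ (α k)).trace := by
  rw [Matrix.mem_unitaryGroup_iff',
    ext_iff_trace_piKronecker_transpose_mul (fun _ : Fin N => hτ)]
  simp only [trace_conj_kronecker_mul_prod_uSmatM, mul_one, Matrix.trace_transpose,
    trace_piKronecker]

end DoubleLayer

section ScaledFamily

variable {d : ℕ} (σ : Fin (d * d) → Matrix (Fin d) (Fin d) ℂ)

/-- The family `σ` with its zeroth member divided by `d`, so that the factor `1 / d` in `S_0` is
carried by the single-site matrix. -/
def scaledFamily (α : Fin (d * d)) : Matrix (Fin d) (Fin d) ℂ :=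
  (if (α : ℕ) = 0 then (d : ℂ)⁻¹ else 1) • σ α

theorem uS_eq_uSmatM_scaledFamily (D : ℕ) (A : Fin d → Fin d → Matrix (Fin D) (Fin D) ℂ)
    (α : Fin (d * d)) : uS d D A σ α = uSmatM d D A (scaledFamily σ α) := by
  simp only [uS, uSmatM, scaledFamily, Finset.smul_sum, Matrix.smul_apply, smul_eq_mul, mul_smul]

theorem uSword_eq_prod_uSmatM (D N : ℕ) (A : Fin d → Fin d → Matrix (Fin D) (Fin D) ℂ)
    (α : Fin N → Fin (d * d)) :
    uSword d D A σ N α =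
      ((List.finRange N).map fun k => uSmatM d D A (scaledFamily σ (α k.rev))).prod := by
  simp only [uSword, List.finRange_reverse, List.map_map, Function.comp_def,
    uS_eq_uSmatM_scaledFamily]

variable {σ}

theorem ne_zero_of_fin_mul_self (α : Fin (d * d)) : d ≠ 0 :=
  left_ne_zero_of_mul α.pos.ne'

theorem trace_scaledFamily
    (hσtr : ∀ α, (σ α).trace = if (α : ℕ) = 0 then (d : ℂ) else 0) (α : Fin (d * d)) :
    (scaledFamily σ α).trace = if (α : ℕ) = 0 then 1 else 0 := by
  rw [scaledFamily, Matrix.trace_smul, hσtr]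
  split_ifs <;> simp [ne_zero_of_fin_mul_self α]

theorem span_range_scaledFamily (hσ : Submodule.span ℂ (Set.range σ) = ⊤) :
    Submodule.span ℂ (Set.range (scaledFamily σ)) = ⊤ := by
  have scale_ne_zero (α : Fin (d * d)) : (if (α : ℕ) = 0 then (d : ℂ)⁻¹ else 1) ≠ 0 := by
    split_ifs <;> simp [ne_zero_of_fin_mul_self α]
  exact Module.Basis.units_smul_span_eq_top hσ (w := fun α => Units.mk0 _ (scale_ne_zero α))

end ScaledFamily

theorem stmt_7_general {d D N : ℕ}
    (A : Fin d → Fin d → Matrix (Fin D) (Fin D) ℂ) (b : Matrix (Fin D) (Fin D) ℂ)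
    (σ : Fin (d * d) → Matrix (Fin d) (Fin d) ℂ)
    (hσtr : ∀ α, (σ α).trace = if (α : ℕ) = 0 then (d : ℂ) else 0)
    (hσspan : Submodule.span ℂ (Set.range σ) = ⊤) :
    uMPO d D A b N ∈ Matrix.unitaryGroup (Fin N → Fin d) ℂ ↔
      ∀ α : Fin N → Fin (d * d),
        ((b.map (starRingEnd ℂ) ⊗ₖ b) * uSword d D A σ N α).trace =
          if ∀ t, (α t : ℕ) = 0 then 1 else 0 := by
  rw [uMPO_mem_unitaryGroup_iff_of_span_eq_top A b (span_range_scaledFamily hσspan),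
    ← (Fin.revPerm.arrowCongr (Equiv.refl (Fin (d * d)))).forall_congr_right]
  refine forall_congr' fun α => ?_
  have all_rev_eq_zero : (∀ k : Fin N, (α k.rev : ℕ) = 0) ↔ ∀ k, (α k : ℕ) = 0 :=
    (Fin.rev_surjective.forall (p := fun k => (α k : ℕ) = 0)).symm
  simp [uSword_eq_prod_uSmatM, trace_scaledFamily hσtr, Fintype.prod_boole, all_rev_eq_zero]

/-- For fixed `N ≥ 2`, the matrix-product operator `U_N` generated by
the tensor `A` with boundary `b` is unitary iff `Tr(B S_{α_N} ⋯ S_{α_1})` equals `1`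
when all `α_k = 0` and `0` otherwise, where `B = conj(b) ⊗ b`. -/
theorem stmt_7 (d D N : ℕ) (hd : 2 ≤ d) (hD : 1 ≤ D) (hN : 2 ≤ N)
    (A : Fin d → Fin d → Matrix (Fin D) (Fin D) ℂ)
    (b : Matrix (Fin D) (Fin D) ℂ)
    (σ : Fin (d * d) → Matrix (Fin d) (Fin d) ℂ)
    (hσ0 : ∀ α : Fin (d * d), (α : ℕ) = 0 → σ α = 1)
    (hσherm : ∀ α : Fin (d * d), (α : ℕ) ≠ 0 → (σ α).IsHermitian)
    (hσtr : ∀ α : Fin (d * d), (α : ℕ) ≠ 0 → (σ α).trace = 0)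
    (hσorth : ∀ α β : Fin (d * d), (α : ℕ) ≠ 0 → (β : ℕ) ≠ 0 →
      (σ α * σ β).trace = if α = β then 1 else 0)
    (hσbasis : Submodule.span ℂ (Set.range σ) = ⊤) :
    uMPO d D A b N ∈ Matrix.unitaryGroup (Fin N → Fin d) ℂ ↔
      ∀ α : Fin N → Fin (d * d),
        (((b.map (starRingEnd ℂ)) ⊗ₖ b) * uSword d D A σ N α).trace =
          (if ∀ t, (α t : ℕ) = 0 then 1 else 0) := by
  exact stmt_7_general A b σ
    (fun α => by by_cases h : (α : ℕ) = 0 <;> simp [h, hσ0, hσtr]) hσbasis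

end
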